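/- Let n ≥ 1, let z₁ = 0, z₂,…,z_n ∈ ℂ∖{0} be pairwise distinct, and let m₁,…,m_n, l, n₀, n₁ ∈ ℂ; set l₁ = l and l_a = 0 for a ≥ 2. Let s₁,…,s_{d₀} be pairwise distinct, t₁,…,t_{d₁} be pairwise distinct, all s_i, t_j distinct from each other, from 0, and from all z_a, satisfying: for each i, ∑_a m_a/(s_i−z_a) + ∑_j 1/(s_i−t_j) − ∑_{j≠i} 1/(s_i−s_j) + n₀ = 0, and for each i, l/t_i + ∑_j 1/(t_i−s_j) − ∑_{j≠i} 1/(t_i−t_j) + n₁ = 0. Define a₋(x) = −( n₁ + l/x + ∑_i 1/(x−s_i) − ∑_j 1/(x−t_j) ), r = d₀ − d₁, and p_i = 2(n₀+n₁) + (2m₁+2l)/s_i + ∑_{a=2}^{n} 2m_a/(s_i−z_a). Then for every x ∈ ℂ distinct from 0 and from all s_i, t_j, z_a: a₋(x)² + a₋′(x) = n₁² + l(l+1)/x² + 2n₁(l+r)/x + ∑_i 2/(x−s_i)² + ∑_i s_i p_i/( x (x−s_i) ). In particular the right-hand side is independent of the t_j. -/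

import Mathlib

open Finset


lemma aux_erase {d : ℕ} (s : Fin d → ℂ) (i : Fin d) :
    ∑ j ∈ univ.erase i, 1 / (s i - s j) = ∑ j, 1 / (s i - s j) := by
  apply Finset.sum_erase
  simp

lemma aux_anti {d : ℕ} (s : Fin d → ℂ) :
    ∑ i, ∑ j, 1 / (s i - s j) = 0 := by
  have h : ∑ i, ∑ j, 1 / (s i - s j) = - ∑ i, ∑ j, 1 / (s i - s j) := by
    conv_lhs => rw [Finset.sum_comm]
    rw [← Finset.sum_neg_distrib]
    refine Finset.sum_congr rfl fun i _ => ?_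
    rw [← Finset.sum_neg_distrib]
    refine Finset.sum_congr rfl fun j _ => ?_
    rw [← neg_sub (s i) (s j), one_div, one_div, inv_neg]
  exact self_eq_neg.mp h

lemma aux_sq {d : ℕ} (s : Fin d → ℂ) (hs : Function.Injective s) (x : ℂ) (hx : ∀ i, x ≠ s i) :
    (∑ i, 1 / (x - s i)) ^ 2 = ∑ i, 1 / (x - s i) ^ 2
      + 2 * ∑ i, 1 / (x - s i) * ∑ j, 1 / (s i - s j) := by
  have key : ∀ i j, 1 / (x - s i) * (1 / (x - s j)) =
      (if i = j then 1 / (x - s i) ^ 2 else 0) + 1 / (x - s i) * (1 / (s i - s j))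
        + 1 / (x - s j) * (1 / (s j - s i)) := by
    intro i j
    have h1 := sub_ne_zero.mpr (hx i)
    have h2 := sub_ne_zero.mpr (hx j)
    by_cases h : i = j
    · subst h
      simp
      field_simp
    · have h3 : s i - s j ≠ 0 := sub_ne_zero.mpr fun e => h (hs e)
      rw [if_neg h, ← neg_sub (s i) (s j)]
      field_simp
      ring
  rw [sq, Finset.sum_mul_sum]
  simp_rw [key, Finset.sum_add_distrib]
  rw [Finset.sum_comm (f := fun i j => 1 / (x - s j) * (1 / (s j - s i)))]
  simp only [Finset.sum_ite_eq, Finset.mem_univ, if_true, Finset.mul_sum]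
  simp only [two_mul, Finset.sum_add_distrib]
  ring

lemma aux_mul {d e : ℕ} (s : Fin d → ℂ) (t : Fin e → ℂ) (x : ℂ) (hst : ∀ i j, s i ≠ t j)
    (hx : ∀ i, x ≠ s i) (hx' : ∀ i, x ≠ t i) :
    (∑ i, 1 / (x - s i)) * (∑ j, 1 / (x - t j)) = ∑ i, 1 / (x - s i) * ∑ j, 1 / (s i - t j)
      + ∑ j, 1 / (x - t j) * ∑ i, 1 / (t j - s i) := by
  have key : ∀ i j, 1 / (x - s i) * (1 / (x - t j)) =
      1 / (x - s i) * (1 / (s i - t j)) + 1 / (x - t j) * (1 / (t j - s i)) := by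
    intro i j
    have h1 := sub_ne_zero.mpr (hx i)
    have h2 := sub_ne_zero.mpr (hx' j)
    have h3 := sub_ne_zero.mpr (hst i j)
    rw [← neg_sub (s i) (t j)]
    field_simp
    ring
  rw [Finset.sum_mul_sum]
  simp_rw [key, Finset.sum_add_distrib, Finset.mul_sum]
  rw [Finset.sum_comm (f := fun i j => 1 / (x - t j) * (1 / (t j - s i)))]

lemma aux_pole {d : ℕ} (s : Fin d → ℂ) (c : Fin d → ℂ) (x : ℂ) (h0 : x ≠ 0)
    (hx : ∀ i, x ≠ s i) :
    ∑ i, s i * c i / (x * (x - s i)) = ∑ i, 1 / (x - s i) * c i - 1 / x * ∑ i, c i := by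
  rw [Finset.mul_sum, ← Finset.sum_sub_distrib]
  refine Finset.sum_congr rfl fun i _ => ?_
  have h1 := sub_ne_zero.mpr (hx i)
  field_simp
  ring

lemma aux_deriv {d : ℕ} (s : Fin d → ℂ) (x : ℂ) (hx : ∀ i, x ≠ s i) :
    HasDerivAt (fun x => ∑ i, 1 / (x - s i)) (-∑ i, 1 / (x - s i) ^ 2) x := by
  rw [← Finset.sum_neg_distrib]
  apply HasDerivAt.fun_sum
  intro i _
  have h := ((hasDerivAt_id x).sub_const (s i)).fun_inv (sub_ne_zero.mpr (hx i))
  simp only [one_div]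
  refine h.congr_deriv ?_
  simp [neg_div]

/-- Corollary on the special case `T₁ = e^{2n₁x} x^{2l}`: the potential `a₋² + a₋'` of the
operator `L₁` built from a solution of the exponential Gaudin Bethe Ansatz equations depends
only on the `s i` and the parameters (the `t j` disappear). Here `z ⟨0⟩ = 0`, `l₁ = l`,
`l_a = 0` for `a ≥ 2`, `r = d₀ - d₁`, and
`p i = 2(n₀+n₁) + (2m₁+2l)/s i + ∑_{a≥2} 2 m_a/(s i - z a)`. -/
theorem exp_gaudin_L1_potential_special (n : ℕ) (hn : 0 < n)
    (z : Fin n → ℂ) (hz_inj : Function.Injective z)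
    (hz1 : z ⟨0, hn⟩ = 0) (hz_ne : ∀ a : Fin n, a ≠ ⟨0, hn⟩ → z a ≠ 0)
    (m : Fin n → ℂ) (l n₀ n₁ : ℂ) (d₀ d₁ : ℕ)
    (s : Fin d₀ → ℂ) (t : Fin d₁ → ℂ)
    (hs_inj : Function.Injective s) (ht_inj : Function.Injective t)
    (hst : ∀ i j, s i ≠ t j)
    (hs0 : ∀ i, s i ≠ 0) (ht0 : ∀ j, t j ≠ 0)
    (hsz : ∀ i a, s i ≠ z a) (htz : ∀ j a, t j ≠ z a)
    (hBAE1 : ∀ i, ∑ a, m a / (s i - z a) + ∑ j, 1 / (s i - t j)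
      - ∑ j ∈ univ.erase i, 1 / (s i - s j) + n₀ = 0)
    (hBAE2 : ∀ i, l / t i + ∑ j, 1 / (t i - s j)
      - ∑ j ∈ univ.erase i, 1 / (t i - t j) + n₁ = 0)
    (aminus : ℂ → ℂ)
    (haminus : ∀ x, aminus x
      = -(n₁ + l / x + ∑ i, 1 / (x - s i) - ∑ j, 1 / (x - t j)))
    (r : ℂ) (hr : r = (d₀ : ℂ) - (d₁ : ℂ))
    (p : Fin d₀ → ℂ)
    (hp : ∀ i, p i = 2 * (n₀ + n₁) + (2 * m ⟨0, hn⟩ + 2 * l) / s i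
      + ∑ a ∈ univ.erase ⟨0, hn⟩, 2 * m a / (s i - z a)) :
    ∀ x : ℂ, x ≠ 0 → (∀ a, x ≠ z a) → (∀ i, x ≠ s i) → (∀ j, x ≠ t j) →
      (aminus x) ^ 2 + deriv aminus x
        = n₁ ^ 2 + l * (l + 1) / x ^ 2 + 2 * n₁ * (l + r) / x
          + ∑ i, 2 / (x - s i) ^ 2
          + ∑ i, s i * p i / (x * (x - s i)) := by
  intro x hx0 hxz hxs hxt
  have hfun : aminus = fun x => -(n₁ + l / x + ∑ i, 1 / (x - s i) - ∑ j, 1 / (x - t j)) :=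
    funext haminus
  have hd : deriv aminus x
      = l / x ^ 2 + ∑ i, 1 / (x - s i) ^ 2 - ∑ j, 1 / (x - t j) ^ 2 := by
    have hl : HasDerivAt (fun x : ℂ => l / x) (-(l / x ^ 2)) x := by
      have h := (hasDerivAt_inv hx0).const_mul l
      simp only [div_eq_mul_inv]
      refine h.congr_deriv ?_
      ring
    have h := (((hl.const_add n₁).fun_add (aux_deriv s x hxs)).fun_sub (aux_deriv t x hxt)).fun_neg
    rw [hfun, h.deriv]
    ring
  simp only [aux_erase] at hBAE1 hBAE2
  have hp' : ∀ i, p i = 2 * n₁ + 2 * l * (1 / s i) + 2 * ∑ j, 1 / (s i - s j)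
      - 2 * ∑ j, 1 / (s i - t j) := by
    intro i
    have h := hBAE1 i
    rw [← Finset.add_sum_erase _ _ (Finset.mem_univ (⟨0, hn⟩ : Fin n)), hz1, sub_zero] at h
    rw [hp i]
    simp only [mul_div_assoc, ← Finset.mul_sum]
    linear_combination (exp := 1) 2 * h
  have hsumE := aux_anti s
  have hsumT := aux_anti t
  have hB : l * ∑ j, 1 / t j + ∑ j, ∑ i, 1 / (t j - s i) + n₁ * d₁ = 0 := by
    have h : ∑ j, (l / t j + ∑ i, 1 / (t j - s i) - ∑ k, 1 / (t j - t k) + n₁) = 0 :=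
      Finset.sum_eq_zero fun j _ => hBAE2 j
    simp only [Finset.sum_add_distrib, Finset.sum_sub_distrib, hsumT] at h
    simp only [Finset.sum_const, Finset.card_univ, Fintype.card_fin, nsmul_eq_mul] at h
    have e : ∑ j, l / t j = l * ∑ j, 1 / t j := by
      rw [Finset.mul_sum]
      exact Finset.sum_congr rfl fun j _ => by ring
    rw [e] at h
    linear_combination h
  have hts : ∑ j, ∑ i, 1 / (t j - s i) = -∑ i, ∑ j, 1 / (s i - t j) := by
    rw [Finset.sum_comm, ← Finset.sum_neg_distrib]
    refine Finset.sum_congr rfl fun i _ => ?_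
    rw [← Finset.sum_neg_distrib]
    refine Finset.sum_congr rfl fun j _ => ?_
    rw [← neg_sub (s i) (t j), one_div, one_div, inv_neg]
  have hsp : ∑ i, p i = 2 * n₁ * d₀ + 2 * l * ∑ i, 1 / s i
      - 2 * ∑ i, ∑ j, 1 / (s i - t j) := by
    simp only [hp', Finset.sum_add_distrib, Finset.sum_sub_distrib, ← Finset.mul_sum, hsumE]
    simp only [Finset.sum_const, Finset.card_univ, Fintype.card_fin, nsmul_eq_mul]
    ring
  have hxp : ∑ i, 1 / (x - s i) * p i = 2 * n₁ * ∑ i, 1 / (x - s i)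
      + 2 * l * ∑ i, 1 / (x - s i) * (1 / s i)
      + 2 * ∑ i, 1 / (x - s i) * ∑ j, 1 / (s i - s j)
      - 2 * ∑ i, 1 / (x - s i) * ∑ j, 1 / (s i - t j) := by
    rw [Finset.mul_sum, Finset.mul_sum, Finset.mul_sum, Finset.mul_sum,
      ← Finset.sum_add_distrib, ← Finset.sum_add_distrib, ← Finset.sum_sub_distrib]
    refine Finset.sum_congr rfl fun i _ => ?_
    rw [hp' i]
    ring
  have hxt' : l * ∑ j, 1 / (x - t j) * (1 / t j) + ∑ j, 1 / (x - t j) * ∑ i, 1 / (t j - s i)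
      - ∑ j, 1 / (x - t j) * ∑ k, 1 / (t j - t k) + n₁ * ∑ j, 1 / (x - t j) = 0 := by
    rw [Finset.mul_sum, Finset.mul_sum, ← Finset.sum_add_distrib, ← Finset.sum_sub_distrib,
      ← Finset.sum_add_distrib]
    refine Finset.sum_eq_zero fun j _ => ?_
    linear_combination 1 / (x - t j) * hBAE2 j
  have pol : ∀ {d : ℕ} (u : Fin d → ℂ), (∀ i, u i ≠ 0) → (∀ i, x ≠ u i) →
      1 / x * ∑ i, 1 / (x - u i)
        = ∑ i, 1 / (x - u i) * (1 / u i) - 1 / x * ∑ i, 1 / u i := by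
    intro d u hu hxu
    rw [← aux_pole u _ x hx0 hxu, Finset.mul_sum]
    refine Finset.sum_congr rfl fun i _ => ?_
    have h1 := sub_ne_zero.mpr (hxu i)
    have h2 := hu i
    field_simp
  have hps := pol s hs0 hxs
  have hpt := pol t ht0 hxt
  have hS := aux_sq s hs_inj x hxs
  have hT := aux_sq t ht_inj x hxt
  have hM := aux_mul s t x hst hxs hxt
  have h2 : ∑ i, 2 / (x - s i) ^ 2 = 2 * ∑ i, 1 / (x - s i) ^ 2 := by
    rw [Finset.mul_sum]
    exact Finset.sum_congr rfl fun i _ => by ring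
  rw [aux_pole s p x hx0 hxs, hd, haminus, h2, hxp, hsp, hr]
  rw [hts] at hB
  generalize (∑ i, 1 / (x - s i)) = S at *
  generalize (∑ i, 1 / (x - t i)) = T at *
  linear_combination hS + hT - 2 * hM + 2 * l * hps - 2 * l * hpt - 2 * hxt' + 2 / x * hB
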